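/- If κ is an α-Mahlo cardinal and β < α is an ordinal, then the set of cardinals δ < κ that are β-Mahlo but not (β+1)-Mahlo is stationary in κ. -/

import Mathlib

/-- `C` is a closed unbounded (club) subset of the ordinal `κ`: it is a set of
ordinals below `κ`, unbounded in `κ`, and contains every `δ < κ` that is a
limit point of `C`. -/
def IsClubIn (C : Set Ordinal) (κ : Ordinal) : Prop :=
  C ⊆ Set.Iio κ ∧
  (∀ θ < κ, ∃ γ ∈ C, θ < γ) ∧
  (∀ δ, 0 < δ → δ < κ → (∀ θ < δ, ∃ γ ∈ C, θ < γ ∧ γ < δ) → δ ∈ C)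

/-- `S` is stationary in the ordinal `κ`: it meets every club subset of `κ`. -/
def IsStationaryIn (S : Set Ordinal) (κ : Ordinal) : Prop :=
  ∀ C : Set Ordinal, IsClubIn C κ → (S ∩ C).Nonempty

/-- A cardinal `κ` is Mahlo if the set of inaccessible cardinals below `κ`
is stationary in `κ`. -/
def IsMahlo (κ : Cardinal) : Prop :=
  IsStationaryIn {γ | ∃ μ : Cardinal, μ.IsInaccessible ∧ μ.ord = γ} κ.ord

/-- `κ` is `α`-Mahlo: `κ` is Mahlo and, for every `β < α`, the set of `β`-Mahlo
cardinals below `κ` is stationary in `κ`.  Defined by recursion on `α`. -/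
def AlphaMahlo (α : Ordinal) (κ : Cardinal) : Prop :=
  IsMahlo κ ∧
    ∀ β < α,
      IsStationaryIn {γ | ∃ μ : Cardinal, AlphaMahlo β μ ∧ μ.ord = γ} κ.ord
termination_by α

/-!
Let `S` be the set of `β`-Mahlo cardinals and `C` a club in `κ`. The limit points of `C` form a
club, so `S` contains a limit point of `C`; let `δ` be the least one. Then `δ ∈ C`, and `δ` is not
`(β+1)`-Mahlo: otherwise `S` would be stationary in `δ` and hence contain a limit point of `C`
below `δ`.

That the limit points of `C` form a club in `κ` usually rests on `κ` having uncountable cofinality.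
Here it is deduced from the limit ordinals being stationary in `κ`, which the inaccessible
cardinals below a Mahlo cardinal provide at once: among limit ordinals, the closure of the set of
successors of elements of `C` contains only limit points of `C`.
-/

open Order Set

section DerivedSet

variable {X : Type*} [LinearOrder X] [TopologicalSpace X] [OrderTopology X] [SuccOrder X]
  [NoMaxOrder X]

theorem derivedSet_image_succ (s : Set X) : derivedSet (succ '' s) = derivedSet s := by
  ext x
  simp only [mem_derivedSet, SuccOrder.accPt_principal, and_congr_right_iff]
  intro _
  constructor <;> intro h a ha
  · obtain ⟨_, ⟨b, -, rfl⟩, hab, hbx⟩ := h a ha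
    obtain ⟨_, ⟨c, hc, rfl⟩, hbc, hcx⟩ := h (succ b) hbx
    exact ⟨c, hc, hab.trans_le (lt_succ_iff.1 hbc), (lt_succ c).trans hcx⟩
  · obtain ⟨b, -, hab, hbx⟩ := h a ha
    obtain ⟨c, hc, hbc, hcx⟩ := h b hbx
    obtain ⟨d, -, hcd, hdx⟩ := h c hcx
    exact ⟨succ c, mem_image_of_mem succ hc, hab.trans (hbc.trans (lt_succ c)),
      (succ_le_of_lt hcd).trans_lt hdx⟩

theorem derivedSet_inter_Ioi (s : Set X) (a : X) :
    derivedSet (s ∩ Ioi a) = derivedSet s ∩ Ioi a := by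
  ext x
  constructor
  · intro h
    refine ⟨derivedSet_mono _ _ inter_subset_left h, ?_⟩
    obtain ⟨hmin, hx⟩ := SuccOrder.accPt_principal.1 h
    obtain ⟨b, hbx⟩ := not_isMin_iff.1 hmin
    obtain ⟨c, ⟨-, hac⟩, -, hcx⟩ := hx b hbx
    exact lt_trans hac hcx
  · rintro ⟨h, hax⟩
    obtain ⟨hmin, hx⟩ := SuccOrder.accPt_principal.1 h
    refine SuccOrder.accPt_principal.2 ⟨hmin, fun b hbx => ?_⟩
    obtain ⟨c, hc, habc, hcx⟩ := hx (max a b) (max_lt hax hbx)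
    exact ⟨c, ⟨hc, (le_max_left a b).trans_lt habc⟩, (le_max_right a b).trans_lt habc, hcx⟩

end DerivedSet

section Club

variable {C S T : Set Ordinal} {κ δ : Ordinal}

theorem mem_derivedSet_iff_forall_lt :
    δ ∈ derivedSet C ↔ 0 < δ ∧ ∀ θ < δ, ∃ γ ∈ C, θ < γ ∧ γ < δ := by
  rw [mem_derivedSet, SuccOrder.accPt_principal, not_isMin_iff_bot_lt]
  rfl

theorem IsClubIn.mem_derivedSet (hC : IsClubIn C κ) (hκ : 0 < κ) : κ ∈ derivedSet C := by
  refine mem_derivedSet_iff_forall_lt.2 ⟨hκ, fun θ hθ => ?_⟩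
  obtain ⟨γ, hγ, hθγ⟩ := hC.2.1 θ hθ
  exact ⟨γ, hγ, hθγ, hC.1 hγ⟩

theorem IsClubIn.derivedSet_inter_Iio_subset (hC : IsClubIn C κ) : derivedSet C ∩ Iio κ ⊆ C := by
  rintro δ ⟨hδC, hδκ⟩
  obtain ⟨hδ, hlim⟩ := mem_derivedSet_iff_forall_lt.1 hδC
  exact hC.2.2 δ hδ hδκ hlim

theorem isClubIn_inter_Iio_of_isClosed (hC : IsClosed C) (hκ : κ ∈ derivedSet C) :
    IsClubIn (C ∩ Iio κ) κ := by
  refine ⟨inter_subset_right, fun θ hθ => ?_, fun δ hδ hδκ hlim => ⟨?_, hδκ⟩⟩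
  · obtain ⟨γ, hγ, hθγ, hγκ⟩ := (mem_derivedSet_iff_forall_lt.1 hκ).2 θ hθ
    exact ⟨γ, ⟨hγ, hγκ⟩, hθγ⟩
  · have hδC : δ ∈ derivedSet (C ∩ Iio κ) := mem_derivedSet_iff_forall_lt.2 ⟨hδ, hlim⟩
    exact (isClosed_iff_derivedSet_subset C).1 hC (derivedSet_mono _ _ inter_subset_left hδC)

theorem IsStationaryIn.mono (hS : IsStationaryIn S κ) (hST : S ⊆ T) : IsStationaryIn T κ :=
  fun C hC => (hS C hC).mono (inter_subset_inter_left C hST)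

theorem IsStationaryIn.pos (hS : IsStationaryIn S κ) : 0 < κ := by
  by_contra! hκ
  have hempty : IsClubIn ∅ κ :=
    ⟨empty_subset _, fun θ hθ => absurd (hθ.trans_le hκ) not_lt_zero,
      fun δ _ hδ => absurd (hδ.trans_le hκ) not_lt_zero⟩
  simpa using hS ∅ hempty

theorem IsStationaryIn.mem_derivedSet_derivedSet (hκ : IsStationaryIn {γ | IsSuccLimit γ} κ)
    (hC : κ ∈ derivedSet C) : κ ∈ derivedSet (derivedSet C) := by
  refine mem_derivedSet_iff_forall_lt.2 ⟨hκ.pos, fun θ hθ => ?_⟩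
  let D := succ '' (C ∩ Ioi θ)
  have hD : derivedSet D = derivedSet C ∩ Ioi θ := by
    rw [derivedSet_image_succ, derivedSet_inter_Ioi]
  have hclub : IsClubIn (closure D ∩ Iio κ) κ := by
    refine isClubIn_inter_Iio_of_isClosed isClosed_closure ?_
    rw [derivedSet_closure, hD]
    exact ⟨hC, hθ⟩
  obtain ⟨γ, hγlim, hγD, hγκ⟩ := hκ _ hclub
  rw [closure_eq_self_union_derivedSet, hD] at hγD
  rcases hγD with ⟨ε, -, rfl⟩ | ⟨hγC, hθγ⟩
  · exact absurd hγlim (not_isSuccLimit_succ ε)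
  · exact ⟨γ, hγC, hθγ, hγκ⟩

theorem IsStationaryIn.isClubIn_derivedSet_inter_Iio
    (hκ : IsStationaryIn {γ | IsSuccLimit γ} κ) (hC : κ ∈ derivedSet C) :
    IsClubIn (derivedSet C ∩ Iio κ) κ :=
  isClubIn_inter_Iio_of_isClosed (isClosed_derivedSet C) (hκ.mem_derivedSet_derivedSet hC)

theorem IsStationaryIn.sep_not_isStationaryIn (hS : IsStationaryIn S κ)
    (hκ : IsStationaryIn {γ | IsSuccLimit γ} κ)
    (hlim : ∀ δ ∈ S, IsStationaryIn {γ | IsSuccLimit γ} δ) :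
    IsStationaryIn {δ ∈ S | ¬ IsStationaryIn S δ} κ := by
  intro C hC
  obtain ⟨δ, ⟨hδS, hδC, hδκ⟩, hmin⟩ :=
    wellFounded_lt.has_min _ (hS _ (hκ.isClubIn_derivedSet_inter_Iio (hC.mem_derivedSet hκ.pos)))
  refine ⟨δ, ⟨hδS, fun hδ => ?_⟩, hC.derivedSet_inter_Iio_subset ⟨hδC, hδκ⟩⟩
  obtain ⟨ε, hεS, hεC, hεδ⟩ := hδ _ ((hlim δ hδS).isClubIn_derivedSet_inter_Iio hδC)
  exact hmin ε ⟨hεS, hεC, mem_Iio.2 (lt_trans hεδ hδκ)⟩ hεδ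

end Club

section Mahlo

variable {κ : Cardinal} {α β : Ordinal}

theorem IsMahlo.isStationaryIn_isSuccLimit (h : IsMahlo κ) :
    IsStationaryIn {γ | IsSuccLimit γ} κ.ord := by
  refine IsStationaryIn.mono h ?_
  rintro _ ⟨μ, hμ, rfl⟩
  exact Cardinal.isSuccLimit_ord hμ.aleph0_lt.le

theorem AlphaMahlo.isMahlo (h : AlphaMahlo α κ) : IsMahlo κ := by
  rw [AlphaMahlo] at h
  exact h.1

theorem AlphaMahlo.isStationaryIn (h : AlphaMahlo α κ) (hβ : β < α) :
    IsStationaryIn {γ | ∃ μ : Cardinal, AlphaMahlo β μ ∧ μ.ord = γ} κ.ord := by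
  rw [AlphaMahlo] at h
  exact h.2 β hβ

end Mahlo

/-- If `κ` is an `α`-Mahlo cardinal and `β < α`, then the set of cardinals
below `κ` that are `β`-Mahlo but not `(β+1)`-Mahlo is stationary in `κ`. -/
theorem stationary_exactly_beta_mahlo {κ : Cardinal} {α β : Ordinal}
    (h : AlphaMahlo α κ) (hβ : β < α) :
    IsStationaryIn
      {γ | ∃ μ : Cardinal, AlphaMahlo β μ ∧ ¬ AlphaMahlo (β + 1) μ ∧ μ.ord = γ}
      κ.ord := by
  have hlim : ∀ δ ∈ {γ | ∃ μ : Cardinal, AlphaMahlo β μ ∧ μ.ord = γ},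
      IsStationaryIn {γ | IsSuccLimit γ} δ := by
    rintro _ ⟨μ, hμ, rfl⟩
    exact hμ.isMahlo.isStationaryIn_isSuccLimit
  refine ((h.isStationaryIn hβ).sep_not_isStationaryIn
    h.isMahlo.isStationaryIn_isSuccLimit hlim).mono ?_
  rintro _ ⟨⟨μ, hμ, rfl⟩, hμ_nonstat⟩
  exact ⟨μ, hμ, fun hμ_succ => hμ_nonstat (hμ_succ.isStationaryIn (lt_add_one β)), rfl⟩
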